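/- The discrete spectrum of the partial integral operator T = T₁ + T₂ coincides with the set D₀(T): σ_disc(T₁ + T₂) = D₀(T). -/

import Mathlib

open MeasureTheory Complex

noncomputable section

/-- The measure on `ℝ` given by restricting Lebesgue measure to `[a,b]`. -/
abbrev muI (a b : ℝ) : MeasureTheory.Measure ℝ :=
  MeasureTheory.volume.restrict (Set.Icc a b)

/-- The discrete spectrum of a bounded operator: the set of isolated points of the
spectrum which are eigenvalues of finite multiplicity. -/
def discreteSpectrum {E : Type*} [NormedAddCommGroup E] [NormedSpace ℂ E]
    (T : E →L[ℂ] E) : Set ℂ :=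
  {z : ℂ | z ∈ spectrum ℂ T ∧ nhdsWithin z (spectrum ℂ T \ {z}) = ⊥ ∧
    LinearMap.ker ((T - z • (1 : E →L[ℂ] E) : E →L[ℂ] E) : E →ₗ[ℂ] E) ≠ ⊥ ∧
    FiniteDimensional ℂ ↥(LinearMap.ker ((T - z • (1 : E →L[ℂ] E) : E →L[ℂ] E) : E →ₗ[ℂ] E))}

set_option linter.unusedSectionVars false
section FA
variable {H : Type*} [NormedAddCommGroup H] [InnerProductSpace ℂ H] [CompleteSpace H]

theorem fa_disc_bound (T : H →L[ℂ] H) (hT : IsSelfAdjoint T) (l : ℂ)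
    (hl : l ∈ discreteSpectrum T) :
    ∃ E : H →L[ℂ] H, FiniteDimensional ℂ (LinearMap.range (E : H →ₗ[ℂ] H)) ∧
      ∃ δ : ℝ, 0 < δ ∧ ∀ f, E f = 0 → δ * ‖f‖ ≤ ‖T f - l • f‖ := by
  obtain ⟨h1, h2, h3, h4⟩ := hl
  have hn : IsStarNormal T := hT.isStarNormal
  classical
  let e : ℂ → ℂ := fun z => if z = l then 1 else 0
  have he : ContinuousOn e (spectrum ℂ T) := by
    intro z hz
    by_cases hzl : z = l
    · subst hzl
      rw [← continuousWithinAt_sdiff_self]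
      unfold ContinuousWithinAt
      rw [h2]; exact Filter.tendsto_bot
    · have : e =ᶠ[nhds z] fun _ => 0 := by
        filter_upwards [isOpen_ne.mem_nhds hzl] with w hw
        simp [e, show w ≠ l from hw]
      exact (continuousAt_const.congr this.symm).continuousWithinAt
  have hu : IsUnit (cfc (fun z => z - l + e z) T) := by
    rw [isUnit_cfc_iff _ _ (by fun_prop)]
    intro z hz
    by_cases hzl : z = l
    · simp [e, hzl]
    · simp [e, hzl, sub_eq_zero]
  have hsub : cfc (fun z => z - l) T = T - l • (1 : H →L[ℂ] H) := by
    rw [cfc_sub (fun z => z) (fun _ => l) T, cfc_id' ℂ T, cfc_const l T,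
      Algebra.algebraMap_eq_smul_one]
  rw [cfc_add T (fun z => z - l) e (by fun_prop) he, hsub] at hu
  have hm : (T - l • (1 : H →L[ℂ] H)) * cfc e T = 0 := by
    rw [← hsub, ← cfc_mul (fun z => z - l) e T (by fun_prop) he]
    have : (fun z => (z - l) * e z) = fun _ => 0 := by
      funext z; by_cases hzl : z = l <;> simp [e, hzl]
    rw [this]; simp
  refine ⟨cfc e T, ?_, ?_⟩
  · refine Submodule.finiteDimensional_of_le (S₂ := LinearMap.ker ((T - l • (1 : H →L[ℂ] H) : H →L[ℂ] H) : H →ₗ[ℂ] H)) ?_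
    rintro _ ⟨x, rfl⟩
    have := congrArg (fun A : H →L[ℂ] H => A x) hm
    simpa using this
  · obtain ⟨u, hu⟩ := hu
    refine ⟨(‖(↑u⁻¹ : H →L[ℂ] H)‖ + 1)⁻¹, by positivity, fun f hf => ?_⟩
    rw [inv_mul_le_iff₀ (by positivity)]
    have h5 : (u : H →L[ℂ] H) f = T f - l • f := by
      rw [hu]; simp [hf]
    have h6 : (↑u⁻¹ : H →L[ℂ] H) ((u : H →L[ℂ] H) f) = f := by
      have := congrArg (fun A : H →L[ℂ] H => A f) u.inv_mul
      exact this
    rw [h5] at h6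
    calc ‖f‖ = ‖(↑u⁻¹ : H →L[ℂ] H) (T f - l • f)‖ := by rw [h6]
      _ ≤ ‖(↑u⁻¹ : H →L[ℂ] H)‖ * ‖T f - l • f‖ := ContinuousLinearMap.le_opNorm _ _
      _ ≤ _ := by gcongr; linarith

theorem fa_fin_unit (F : H →L[ℂ] H) (hF : FiniteDimensional ℂ (LinearMap.range (F : H →ₗ[ℂ] H)))
    (hi : ∀ x, x + F x = 0 → x = 0) : IsUnit (1 + F) := by
  rw [ContinuousLinearMap.isUnit_iff_bijective]
  constructor
  · rw [injective_iff_map_eq_zero]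
    intro x hx; exact hi x (by simpa using hx)
  · intro y
    let V := LinearMap.range (F : H →ₗ[ℂ] H)
    let g : V →ₗ[ℂ] V := ((1 + F : H →L[ℂ] H) : H →ₗ[ℂ] H).restrict (p := V) (q := V) (by
      intro x hx
      exact V.add_mem hx ⟨x, rfl⟩)
    have hg : Function.Injective g := by
      rw [injective_iff_map_eq_zero]
      intro x hx
      apply Subtype.ext
      apply hi
      have := congrArg Subtype.val hx
      simpa [g] using this
    obtain ⟨v, hv⟩ := (LinearMap.injective_iff_surjective.mp hg) ⟨F y, ⟨y, rfl⟩⟩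
    have hv' : (v : H) + F v = F y := by
      have := congrArg Subtype.val hv
      simpa [g] using this
    refine ⟨y - v, ?_⟩
    simp only [_root_.add_apply, one_apply_eq_self, map_sub]
    rw [← hv']; abel

theorem fa_fin_mul_left (A F : H →L[ℂ] H)
    (hF : FiniteDimensional ℂ (LinearMap.range (F : H →ₗ[ℂ] H))) :
    FiniteDimensional ℂ (LinearMap.range ((A * F : H →L[ℂ] H) : H →ₗ[ℂ] H)) := by
  have : LinearMap.range ((A * F : H →L[ℂ] H) : H →ₗ[ℂ] H)
      = (LinearMap.range (F : H →ₗ[ℂ] H)).map (A : H →ₗ[ℂ] H) := by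
    rw [← LinearMap.range_comp]; rfl
  rw [this]; infer_instance

theorem fa_fin_add (F G : H →L[ℂ] H)
    (hF : FiniteDimensional ℂ (LinearMap.range (F : H →ₗ[ℂ] H)))
    (hG : FiniteDimensional ℂ (LinearMap.range (G : H →ₗ[ℂ] H))) :
    FiniteDimensional ℂ (LinearMap.range ((F + G : H →L[ℂ] H) : H →ₗ[ℂ] H)) := by
  refine Submodule.finiteDimensional_of_le (S₂ := LinearMap.range (F : H →ₗ[ℂ] H) ⊔
    LinearMap.range (G : H →ₗ[ℂ] H)) ?_
  rintro _ ⟨x, rfl⟩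
  exact Submodule.add_mem_sup ⟨x, rfl⟩ ⟨x, rfl⟩

theorem fa_isolated (T A F : H →L[ℂ] H) (hT : IsSelfAdjoint T) (l : ℂ)
    (hA : IsUnit A) (hF : FiniteDimensional ℂ (LinearMap.range (F : H →ₗ[ℂ] H)))
    (hTA : T - l • (1 : H →L[ℂ] H) = A * (1 + F))
    (hne : ∃ g, g ≠ 0 ∧ g + F g = 0) : l ∈ discreteSpectrum T := by
  obtain ⟨u, rfl⟩ := hA
  set N := LinearMap.ker ((T - l • (1 : H →L[ℂ] H) : H →L[ℂ] H) : H →ₗ[ℂ] H) with hN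
  have hmem : ∀ x, x ∈ N ↔ T x = l • x := by
    intro x; simp [hN, sub_eq_zero]
  have hfd : FiniteDimensional ℂ N := by
    refine Submodule.finiteDimensional_of_le (S₂ := LinearMap.range (F : H →ₗ[ℂ] H)) ?_
    intro x hx
    have h0 : (↑u * (1 + F)) x = 0 := by rw [← hTA]; exact hx
    have h1 : x + F x = 0 := by
      have := congrArg (↑u⁻¹ : H →L[ℂ] H) h0
      rw [← mul_apply_eq_comp, ← mul_assoc] at this
      simpa using this
    refine ⟨-x, ?_⟩
    simp only [ContinuousLinearMap.coe_coe, map_neg]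
    rw [eq_comm, ← add_eq_zero_iff_eq_neg]; exact h1
  obtain ⟨g, hg0, hg⟩ := hne
  have hgN : g ∈ N := by
    change (T - l • (1 : H →L[ℂ] H)) g = 0
    rw [hTA]
    simp [hg]
  have hNb : N ≠ ⊥ := by
    intro h; rw [h] at hgN; exact hg0 (by simpa using hgN)
  have hspec : l ∈ spectrum ℂ T := by
    intro hu
    change IsUnit _ at hu
    rw [ContinuousLinearMap.isUnit_iff_bijective] at hu
    apply hg0
    apply hu.1
    rw [map_zero]
    have := (hmem g).1 hgN
    simp [Algebra.algebraMap_eq_smul_one, this]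
  have hreal : star l = l := by
    have := hT.mem_spectrum_eq_re hspec
    rw [this]; simp
  refine ⟨hspec, ?_, hNb, hfd⟩
  set P := N.starProjection with hP
  have hTP : T * P = l • P := by
    ext x
    exact (hmem _).1 (Submodule.starProjection_apply_mem N x)
  have hPsa : IsSelfAdjoint P := isSelfAdjoint_starProjection N
  have hPT : P * T = l • P := by
    have := congrArg star hTP
    rwa [star_mul, hT.star_eq, hPsa.star_eq, star_smul, hPsa.star_eq, hreal] at this
  have hPP : P * P = P := N.isIdempotentElem_starProjection
  have hPfin : FiniteDimensional ℂ (LinearMap.range (P : H →ₗ[ℂ] H)) := by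
    refine Submodule.finiteDimensional_of_le (S₂ := N) ?_
    rintro _ ⟨x, rfl⟩
    exact Submodule.starProjection_apply_mem N x
  have hunit : IsUnit (T - l • (1 : H →L[ℂ] H) + P) := by
    have e1 : T - l • (1 : H →L[ℂ] H) + P = ↑u * (1 + (F + ↑u⁻¹ * P)) := by
      rw [hTA, ← add_assoc, mul_add _ (1 + F), ← mul_assoc, u.mul_inv, one_mul]
    rw [e1]
    refine u.isUnit.mul (fa_fin_unit _ (fa_fin_add _ _ hF (fa_fin_mul_left _ _ hPfin)) ?_)
    intro x hx
    have h1 : (T - l • (1 : H →L[ℂ] H) + P) x = 0 := by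
      rw [e1]
      rw [mul_apply_eq_comp]
      have : (1 + (F + ↑u⁻¹ * P)) x = 0 := by simpa using hx
      rw [this, map_zero]
    have h2 : P x = 0 := by
      have := congrArg P h1
      rw [← mul_apply_eq_comp] at this
      have e2 : P * (T - l • (1 : H →L[ℂ] H) + P) = P := by
        rw [mul_add, mul_sub, hPT, hPP]; simp
      rw [e2] at this; simpa using this
    have h3 : x ∈ N := by
      change (T - l • (1 : H →L[ℂ] H)) x = 0
      simpa [h2] using h1
    rw [← h2]; exact (Submodule.starProjection_eq_self_iff.2 h3).symm
  have hcont : Continuous fun w : ℂ => T - w • (1 : H →L[ℂ] H) + P := by fun_prop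
  have hev : ∀ᶠ w in nhds l, IsUnit (T - w • (1 : H →L[ℂ] H) + P) :=
    hcont.continuousAt.eventually (Units.isOpen.mem_nhds hunit)
  have hev2 : ∀ᶠ w in nhds l, l + 1 - w ≠ 0 := by
    have : Continuous fun w : ℂ => l + 1 - w := by fun_prop
    exact this.continuousAt.eventually (isOpen_ne.mem_nhds (by simp))
  rw [← Filter.empty_mem_iff_bot, mem_nhdsWithin_iff_eventually]
  filter_upwards [hev, hev2] with w hw hw2 hws
  exfalso
  apply hws.1
  change IsUnit _
  have hwl : l - w ≠ 0 := sub_ne_zero.2 (fun h => hws.2 h.symm)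
  have e3 : T - w • (1 : H →L[ℂ] H) =
      (T - w • (1 : H →L[ℂ] H) + P) * (1 - (l + 1 - w)⁻¹ • P) := by
    have : (T - w • (1 : H →L[ℂ] H) + P) * P = (l + 1 - w) • P := by
      rw [add_mul, sub_mul, hTP, hPP, smul_mul_assoc, one_mul]
      module
    rw [mul_sub, mul_one, mul_smul_comm, this, smul_smul, inv_mul_cancel₀ hw2]
    module
  have e4 : (1 - (l + 1 - w)⁻¹ • P) * (1 + (l - w)⁻¹ • P) = 1 := by
    rw [sub_mul, mul_add, smul_mul_assoc, mul_add, mul_smul_comm, mul_smul_comm, hPP]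
    simp only [mul_one, one_mul]
    match_scalars
    · simp
    · field_simp
      ring
  have e5 : (1 + (l - w)⁻¹ • P) * (1 - (l + 1 - w)⁻¹ • P) = 1 := by
    rw [mul_sub, add_mul, mul_smul_comm, add_mul, smul_mul_assoc, smul_mul_assoc, hPP]
    simp only [mul_one, one_mul]
    match_scalars
    · simp
    · field_simp
      ring
  have hu2 : IsUnit (1 - (l + 1 - w)⁻¹ • P) := ⟨⟨_, _, e4, e5⟩, rfl⟩
  rw [Algebra.algebraMap_eq_smul_one, ← IsUnit.neg_iff, neg_sub, e3]
  exact hw.mul hu2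
end FA

section MT
variable {μ ν : Measure ℝ} [IsFiniteMeasure μ] [IsFiniteMeasure ν]

theorem mt_tensor {u v : ℝ → ℂ} (hu : MemLp u 2 μ) (hv : MemLp v 2 ν) :
    MemLp (fun z : ℝ × ℝ => u z.1 * v z.2) 2 (μ.prod ν) := by
  have hm : AEStronglyMeasurable (fun z : ℝ × ℝ => u z.1 * v z.2) (μ.prod ν) :=
    hu.1.comp_fst.mul hv.1.comp_snd
  rw [memLp_two_iff_integrable_sq_norm hm]
  have := (hu.integrable_norm_pow (by norm_num)).mul_prod (hv.integrable_norm_pow (by norm_num))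
  simpa [mul_pow] using this

theorem mt_slice {f : ℝ × ℝ → ℂ} (hf : MemLp f 2 (μ.prod ν)) :
    ∀ᵐ y ∂ν, MemLp (fun s => f (s, y)) 2 μ := by
  have h1 := (hf.integrable_norm_pow (by norm_num)).prod_left_ae
  have h2 := hf.1.prodMk_right
  filter_upwards [h1, h2] with y h1 h2
  rw [memLp_two_iff_integrable_sq_norm h2]
  exact_mod_cast h1

/-- partial inner product -/
def GG (μ : Measure ℝ) (u : ℝ → ℂ) (f : ℝ × ℝ → ℂ) (y : ℝ) : ℂ :=
  ∫ s, star (u s) * f (s, y) ∂μ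

theorem mt_int {u v : ℝ → ℂ} (hu : MemLp u 2 μ) (hv : MemLp v 2 μ) :
    Integrable (fun s => star (u s) * v s) μ :=
  hu.star.integrable_mul hv

theorem mt_cs {u v : ℝ → ℂ} (hu : MemLp u 2 μ) (hv : MemLp v 2 μ) :
    ‖∫ s, star (u s) * v s ∂μ‖ ^ 2 ≤ (∫ s, ‖u s‖ ^ 2 ∂μ) * (∫ s, ‖v s‖ ^ 2 ∂μ) := by
  have key : ∀ {w : ℝ → ℂ} (hw : MemLp w 2 μ), ‖hw.toLp w‖ ^ 2 = ∫ s, ‖w s‖ ^ 2 ∂μ := by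
    intro w hw
    have := inner_self_eq_norm_sq_to_K (𝕜 := ℂ) (hw.toLp w)
    rw [L2.inner_def] at this
    have e : ∫ a, inner ℂ ((hw.toLp w) a) ((hw.toLp w) a) ∂μ = ((∫ s, ‖w s‖ ^ 2 ∂μ : ℝ) : ℂ) := by
      rw [← integral_complex_ofReal]
      apply integral_congr_ae
      filter_upwards [hw.coeFn_toLp] with a ha
      rw [ha, inner_self_eq_norm_sq_to_K]; simp
    rw [e] at this
    exact Complex.ofReal_injective (by rw [this]; simp)
  rw [← key hu, ← key hv, ← mul_pow]
  have e : ∫ s, star (u s) * v s ∂μ = inner ℂ (hu.toLp u) (hv.toLp v) := by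
    rw [L2.inner_def]
    apply integral_congr_ae
    filter_upwards [hu.coeFn_toLp, hv.coeFn_toLp] with a ha hb
    rw [ha, hb]; simp [mul_comm]
  rw [e]
  gcongr
  exact norm_inner_le_norm _ _

theorem mt_GG_memLp {u : ℝ → ℂ} {f : ℝ × ℝ → ℂ} (hu : MemLp u 2 μ) (hf : MemLp f 2 (μ.prod ν)) :
    MemLp (GG μ u f) 2 ν := by
  have hm : AEStronglyMeasurable (GG μ u f) ν := by
    have : AEStronglyMeasurable (fun z : ℝ × ℝ => star (u z.2) * f (z.2, z.1)) (ν.prod μ) :=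
      hu.1.star.comp_snd.mul hf.1.prod_swap
    exact this.integral_prod_right'
  rw [memLp_two_iff_integrable_sq_norm hm]
  have h1 := (hf.integrable_norm_pow (by norm_num)).integral_prod_right
  refine (h1.const_mul (∫ s, ‖u s‖ ^ 2 ∂μ)).mono' (hm.norm.pow 2) ?_
  filter_upwards [mt_slice hf] with y hy
  simpa [GG] using mt_cs hu hy

theorem mt_ae_snd {q : ℝ → Prop} (hq : ∀ᵐ y ∂ν, q y) : ∀ᵐ z ∂(μ.prod ν), q z.2 :=
  Measure.quasiMeasurePreserving_snd.ae hq

theorem mt_ae_fst {q : ℝ → Prop} (hq : ∀ᵐ y ∂μ, q y) : ∀ᵐ z ∂(μ.prod ν), q z.1 :=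
  Measure.quasiMeasurePreserving_fst.ae hq

theorem mt_ae_swap {F F' : ℝ × ℝ → ℂ} (h : F =ᵐ[μ.prod ν] F') :
    ∀ᵐ y ∂ν, ∀ᵐ s ∂μ, F (s, y) = F' (s, y) := by
  have : ∀ᵐ z ∂(ν.prod μ), F z.swap = F' z.swap :=
    (Measure.measurePreserving_swap (μ := ν) (ν := μ)).quasiMeasurePreserving.ae h
  exact Measure.ae_ae_of_ae_prod this

theorem mt_GG_congr (u : ℝ → ℂ) {F F' : ℝ × ℝ → ℂ} (h : F =ᵐ[μ.prod ν] F') :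
    ∀ᵐ y ∂ν, GG μ u F y = GG μ u F' y := by
  filter_upwards [mt_ae_swap h] with y hy
  apply integral_congr_ae
  filter_upwards [hy] with s hs
  rw [hs]

variable {n : ℕ} {φ : Fin n → ℝ → ℂ}

theorem mt_GG_decomp (hφ : ∀ k, MemLp (φ k) 2 μ)
    (hON : ∀ i j, ∫ x, star (φ i x) * φ j x ∂μ = if i = j then 1 else 0)
    {F f : ℝ × ℝ → ℂ} (hf : MemLp f 2 (μ.prod ν)) (c : ℂ) (g : Fin n → ℝ → ℂ)
    (hF : F =ᵐ[μ.prod ν] fun z => ∑ j, φ j z.1 * g j z.2 + c * f z) (k : Fin n) :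
    ∀ᵐ y ∂ν, GG μ (φ k) F y = g k y + c * GG μ (φ k) f y := by
  filter_upwards [mt_GG_congr (φ k) hF, mt_slice hf] with y hy hs
  rw [hy]
  unfold GG
  have : ∀ s, star (φ k s) * (∑ j, φ j s * g j y + c * f (s, y)) =
      ∑ j, (star (φ k s) * φ j s) * g j y + c * (star (φ k s) * f (s, y)) := by
    intro s
    rw [mul_add, Finset.mul_sum]
    congr 1
    · apply Finset.sum_congr rfl; intros; ring
    · ring
  simp_rw [this]
  rw [integral_add, integral_finsetSum, integral_const_mul]
  · simp_rw [integral_mul_const, hON]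
    simp
  · intro i _
    exact (mt_int (hφ k) (hφ i)).mul_const _
  · exact integrable_finsetSum _ fun i _ => (mt_int (hφ k) (hφ i)).mul_const _
  · exact (mt_int (hφ k) hs).const_mul c

/-- normal form of `T1` -/
def IsT (μ ν : Measure ℝ) {n : ℕ} (φ : Fin n → ℝ → ℂ) (h : Fin n → ℝ → ℝ)
    (T : Lp ℂ 2 (μ.prod ν) →L[ℂ] Lp ℂ 2 (μ.prod ν)) : Prop :=
  ∀ f : Lp ℂ 2 (μ.prod ν), T f =ᵐ[μ.prod ν]
    fun z => ∑ k, φ k z.1 * ((h k z.2 : ℂ) * GG μ (φ k) f z.2)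

theorem mt_isT (hφ : ∀ k, MemLp (φ k) 2 μ) {h : Fin n → ℝ → ℝ}
    {T : Lp ℂ 2 (μ.prod ν) →L[ℂ] Lp ℂ 2 (μ.prod ν)}
    (hT : ∀ f : Lp ℂ 2 (μ.prod ν), ∀ᵐ z ∂(μ.prod ν),
        T f z = ∫ s, (∑ k, φ k z.1 * star (φ k s) * (h k z.2 : ℂ)) * f (s, z.2) ∂μ) :
    IsT μ ν φ h T := by
  intro f
  filter_upwards [hT f, mt_ae_snd (μ := μ) (mt_slice (Lp.memLp f))] with z hz hs
  rw [hz]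
  unfold GG
  simp_rw [Finset.sum_mul]
  have : ∀ s k, φ k z.1 * star (φ k s) * (h k z.2 : ℂ) * f (s, z.2) =
    (φ k z.1 * (h k z.2 : ℂ)) * (star (φ k s) * f (s, z.2)) := by intros; ring
  simp_rw [this]
  rw [integral_finsetSum]
  · simp_rw [integral_const_mul, mul_assoc]
  · intro i _
    exact (mt_int (hφ i) hs).const_mul _

theorem mt_bddmul {r : ℝ → ℂ} (hr : Measurable r) {C : ℝ} (hC : ∀ᵐ y ∂ν, ‖r y‖ ≤ C) {v : ℝ → ℂ}
    (hv : MemLp v 2 ν) : MemLp (fun y => r y * v y) 2 ν := by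
  refine (hv.norm.const_mul C).mono (hr.aestronglyMeasurable.mul hv.1) ?_
  filter_upwards [hC] with y hy
  have : 0 ≤ C := (norm_nonneg _).trans hy
  rw [norm_mul, norm_mul, norm_norm, Real.norm_of_nonneg this]
  gcongr

theorem mt_unit (hφ : ∀ k, MemLp (φ k) 2 μ)
    (hON : ∀ i j, ∫ x, star (φ i x) * φ j x ∂μ = if i = j then 1 else 0)
    {h : Fin n → ℝ → ℝ} (hm : ∀ k, Measurable (h k))
    (hb : ∀ k, ∃ C : ℝ, ∀ᵐ y ∂ν, |h k y| ≤ C)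
    {T : Lp ℂ 2 (μ.prod ν) →L[ℂ] Lp ℂ 2 (μ.prod ν)} (hT : IsT μ ν φ h T)
    {l : ℂ} (hl : l ≠ 0) (hsep : ∀ k, ∃ ε : ℝ, 0 < ε ∧ ∀ᵐ y ∂ν, ε ≤ ‖(h k y : ℂ) - l‖) :
    IsUnit (T - l • (1 : Lp ℂ 2 (μ.prod ν) →L[ℂ] Lp ℂ 2 (μ.prod ν))) := by
  have hne : ∀ k, ∀ᵐ y ∂ν, (h k y : ℂ) - l ≠ 0 := by
    intro k
    obtain ⟨ε, he, hk⟩ := hsep k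
    filter_upwards [hk] with y hy h0
    rw [h0, norm_zero] at hy; linarith
  rw [ContinuousLinearMap.isUnit_iff_bijective]
  constructor
  · rw [injective_iff_map_eq_zero]
    intro f hf
    have hf' : T f = l • f := by
      simpa [sub_eq_zero] using hf
    have h1 : (f : ℝ × ℝ → ℂ) =ᵐ[μ.prod ν] fun z =>
        ∑ k, φ k z.1 * (l⁻¹ * ((h k z.2 : ℂ) * GG μ (φ k) f z.2)) + 0 * f z := by
      have h2 := hT f
      rw [hf'] at h2
      filter_upwards [h2, Lp.coeFn_smul l f] with z hz hz2
      rw [hz2] at hz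
      have : f z = l⁻¹ * (l • (f : ℝ × ℝ → ℂ)) z := by
        simp [hl]
      rw [this, hz, Finset.mul_sum, zero_mul, add_zero]
      apply Finset.sum_congr rfl; intros; ring
    have h3 : ∀ k, ∀ᵐ y ∂ν, GG μ (φ k) f y = 0 := by
      intro k
      filter_upwards [mt_GG_decomp hφ hON (Lp.memLp f) 0
        (fun k y => l⁻¹ * ((h k y : ℂ) * GG μ (φ k) f y)) h1 k, hne k] with y hy hy2
      have h4 : ((h k y : ℂ) - l) * GG μ (φ k) f y = 0 := by
        have := congrArg (fun t => l * t) hy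
        simp only [zero_mul, add_zero, mul_inv_cancel_left₀ hl] at this
        linear_combination -this
      exact (mul_eq_zero.1 h4).resolve_left hy2
    rw [Lp.eq_zero_iff_ae_eq_zero]
    filter_upwards [h1, mt_ae_snd (μ := μ) (ae_all_iff.2 h3)] with z hz hz3
    rw [hz]; simp [hz3]
  · intro g
    let r : Fin n → ℝ → ℂ := fun k y => (h k y : ℂ) / (l * ((h k y : ℂ) - l))
    have hr : ∀ k, Measurable (r k) := by
      intro k
      have := hm k
      fun_prop
    have hrb : ∀ k, ∃ C : ℝ, ∀ᵐ y ∂ν, ‖r k y‖ ≤ C := by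
      intro k
      obtain ⟨C, hC⟩ := hb k
      obtain ⟨ε, he, hk⟩ := hsep k
      refine ⟨C / (‖l‖ * ε), ?_⟩
      filter_upwards [hC, hk] with y h1 h2
      simp only [r, norm_div, norm_mul, Complex.norm_real, Real.norm_eq_abs]
      have : 0 < ‖l‖ := norm_pos_iff.2 hl
      have := (abs_nonneg _).trans h1
      gcongr
    let F : ℝ × ℝ → ℂ := fun z => ∑ j, φ j z.1 * (r j z.2 * GG μ (φ j) g z.2) + (-l⁻¹) * g z
    have hF : MemLp F 2 (μ.prod ν) := by
      refine MemLp.add (memLp_finsetSum _ fun j _ => ?_) ((Lp.memLp g).const_mul _)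
      obtain ⟨C, hC⟩ := hrb j
      exact mt_tensor (hφ j) (mt_bddmul (hr j) hC (mt_GG_memLp (hφ j) (Lp.memLp g)))
    refine ⟨hF.toLp F, ?_⟩
    have hd := fun k => mt_GG_decomp hφ hON (Lp.memLp g) (-l⁻¹)
        (fun j y => r j y * GG μ (φ j) g y) hF.coeFn_toLp k
    apply Lp.ext
    have e : (T - l • (1 : Lp ℂ 2 (μ.prod ν) →L[ℂ] Lp ℂ 2 (μ.prod ν))) (hF.toLp F)
      = T (hF.toLp F) - l • hF.toLp F := by simp
    rw [e]
    filter_upwards [Lp.coeFn_sub (T (hF.toLp F)) (l • hF.toLp F), Lp.coeFn_smul l (hF.toLp F),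
      hF.coeFn_toLp, hT (hF.toLp F), mt_ae_snd (μ := μ) (ae_all_iff.2 hd),
      mt_ae_snd (μ := μ) (ae_all_iff.2 hne)] with z h1 h2 h3 h4 h5 h6
    rw [h1, Pi.sub_apply, h2, Pi.smul_apply, h3, h4]
    simp only [h5]
    simp only [F, smul_eq_mul]
    rw [mul_add, Finset.mul_sum, ← sub_sub, ← Finset.sum_sub_distrib]
    rw [Finset.sum_eq_zero]
    · field_simp; ring
    · intro k _
      have := h6 k
      simp only [r]
      field_simp
      ring

theorem mt_GG_tensor (v u g : ℝ → ℂ) (y : ℝ) :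
    GG μ v (fun z => u z.1 * g z.2) y = (∫ s, star (v s) * u s ∂μ) * g y := by
  unfold GG
  rw [← integral_mul_const]
  congr 1; funext s; ring

end MT

theorem poly_memLp (c d : ℝ) {A : Set ℝ} (hA : MeasurableSet A) (q : Polynomial ℂ) :
    MemLp (A.indicator fun y : ℝ => q.eval (y : ℂ)) 2 (muI c d) := by
  have hc : Continuous fun y : ℝ => q.eval (y : ℂ) := q.continuous.comp Complex.continuous_ofReal
  obtain ⟨C, hC⟩ := (isCompact_Icc (a := c) (b := d)).exists_bound_of_continuousOn hc.continuousOn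
  refine MemLp.indicator hA (MemLp.of_bound hc.aestronglyMeasurable C ?_)
  filter_upwards [ae_restrict_mem measurableSet_Icc] with y hy
  exact hC y hy

theorem poly_ne (c d : ℝ) {A : Set ℝ} (hA0 : muI c d A ≠ 0) {q : Polynomial ℂ} (hq : q ≠ 0) :
    ¬ ∀ᵐ y ∂(muI c d), A.indicator (fun y : ℝ => q.eval (y : ℂ)) y = 0 := by
  intro h
  apply hA0
  have hfin : {y : ℝ | q.eval (y : ℂ) = 0}.Finite := by
    have h1 := q.rootSet_finite ℂ
    refine (h1.preimage (Complex.ofReal_injective.injOn (s := Set.univ)|>.mono (Set.subset_univ _))).subset ?_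
    intro y hy
    simp only [Set.mem_preimage]
    rw [Polynomial.mem_rootSet]
    exact ⟨hq, by simpa using hy⟩
  have h2 : ∀ᵐ y ∂(muI c d), y ∉ {y : ℝ | q.eval (y : ℂ) = 0} :=
    measure_eq_zero_iff_ae_notMem.1 (hfin.measure_zero _)
  rw [measure_eq_zero_iff_ae_notMem]
  filter_upwards [h, h2] with y h1 h2 hyA
  rw [Set.indicator_of_mem hyA] at h1
  exact h2 h1

theorem poly_ker {V : Type*} [AddCommGroup V] [Module ℂ V] [FiniteDimensional ℂ V]
    (L : Polynomial ℂ →ₗ[ℂ] V) : ∃ q, q ≠ 0 ∧ L q = 0 := by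
  by_contra hcon
  push Not at hcon
  have : Function.Injective L := by
    rw [injective_iff_map_eq_zero]
    intro q hq
    by_contra h0
    exact hcon q h0 hq
  exact Polynomial.not_finite (Module.Finite.of_injective L this)

/-- functional on polynomials -/
def polyFun (c d : ℝ) {A : Set ℝ} (hA : MeasurableSet A) (w : ℝ → ℂ) (hw : MemLp w 2 (muI c d)) :
    Polynomial ℂ →ₗ[ℂ] ℂ where
  toFun q := ∫ t, star (w t) * A.indicator (fun y : ℝ => q.eval (y : ℂ)) t ∂(muI c d)
  map_add' q r := by
    rw [← integral_add (mt_int hw (poly_memLp c d hA q)) (mt_int hw (poly_memLp c d hA r))]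
    congr 1; funext t
    by_cases ht : t ∈ A <;> simp [ht, mul_add]
  map_smul' k q := by
    simp only [RingHom.id_apply, smul_eq_mul]
    rw [← integral_const_mul]
    congr 1; funext t
    by_cases ht : t ∈ A
    · simp [ht]; ring
    · simp [ht]

/-- tensor map on polynomials -/
def polyTen (μ : Measure ℝ) [IsFiniteMeasure μ] (c d : ℝ) {A : Set ℝ} (hA : MeasurableSet A)
    (u : ℝ → ℂ) (hu : MemLp u 2 μ) :
    Polynomial ℂ →ₗ[ℂ] Lp ℂ 2 (μ.prod (muI c d)) where
  toFun q := (mt_tensor hu (poly_memLp c d hA q)).toLp _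
  map_add' q r := by
    rw [← MemLp.toLp_add]
    congr 1; funext z
    by_cases ht : z.2 ∈ A <;> simp [ht, mul_add]
  map_smul' k q := by
    rw [RingHom.id_apply, ← MemLp.toLp_const_smul]
    congr 1; funext z
    by_cases ht : z.2 ∈ A
    · simp [ht]; ring
    · simp [ht]

/-- normal form of `T2` -/
def IsT' (μ ν : Measure ℝ) {m : ℕ} (ψ : Fin m → ℝ → ℂ) (p : Fin m → ℝ → ℝ)
    (T : Lp ℂ 2 (μ.prod ν) →L[ℂ] Lp ℂ 2 (μ.prod ν)) : Prop :=
  ∀ f : Lp ℂ 2 (μ.prod ν), T f =ᵐ[μ.prod ν]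
    fun z => ∑ j, ψ j z.2 * ((p j z.1 : ℂ) * ∫ t, star (ψ j t) * f (z.1, t) ∂ν)

theorem mt_approx {μ : Measure ℝ} [IsFiniteMeasure μ] {c d : ℝ} {n m : ℕ}
    {φ : Fin n → ℝ → ℂ} {h : Fin n → ℝ → ℝ} {ψ : Fin m → ℝ → ℂ} {p : Fin m → ℝ → ℝ}
    (hψ : ∀ j, MemLp (ψ j) 2 (muI c d))
    {T1 T2 : Lp ℂ 2 (μ.prod (muI c d)) →L[ℂ] Lp ℂ 2 (μ.prod (muI c d))}
    (hT1 : IsT μ (muI c d) φ h T1) (hT2 : IsT' μ (muI c d) ψ p T2)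
    (E : Lp ℂ 2 (μ.prod (muI c d)) →L[ℂ] Lp ℂ 2 (μ.prod (muI c d)))
    (hE : FiniteDimensional ℂ (LinearMap.range E.toLinearMap))
    {u : ℝ → ℂ} (hu : MemLp u 2 μ) (hu0 : ¬ ∀ᵐ x ∂μ, u x = 0)
    {A : Set ℝ} (hA : MeasurableSet A) (hA0 : muI c d A ≠ 0)
    (κ : ℝ → ℂ) (l : ℂ) (ε : ℝ) (hκ : ∀ y ∈ A, ‖κ y - l‖ ≤ ε)
    (hκu : ∀ x y, ∑ i, φ i x * ((h i y : ℂ) * ∫ s, star (φ i s) * u s ∂μ) = κ y * u x) :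
    ∃ f, f ≠ 0 ∧ E f = 0 ∧ ‖(T1 + T2) f - l • f‖ ≤ ε * ‖f‖ := by
  let L := polyTen μ c d hA u hu
  let J : Polynomial ℂ →ₗ[ℂ] (Fin m → ℂ) := LinearMap.pi fun j => polyFun c d hA (ψ j) (hψ j)
  let K := (E.toLinearMap.rangeRestrict ∘ₗ L).prod J
  obtain ⟨q, hq, hqK⟩ := poly_ker K
  have hK1 : E (L q) = 0 := by
    have := congrArg (fun w => ((w.1 : _) : Lp ℂ 2 (μ.prod (muI c d)))) hqK
    simpa [K] using this
  have hK2 : ∀ j, ∫ t, star (ψ j t) * A.indicator (fun y : ℝ => q.eval (y : ℂ)) t ∂(muI c d) = 0 := by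
    intro j
    exact congrFun (congrArg (fun w => w.2) hqK) j
  set g : ℝ → ℂ := A.indicator (fun y : ℝ => q.eval (y : ℂ)) with hg
  have hL : (L q : ℝ × ℝ → ℂ) =ᵐ[μ.prod (muI c d)] fun z => u z.1 * g z.2 :=
    (mt_tensor hu (poly_memLp c d hA q)).coeFn_toLp
  refine ⟨L q, ?_, hK1, ?_⟩
  · intro h0
    rw [Lp.eq_zero_iff_ae_eq_zero] at h0
    have h1 : ∀ᵐ z ∂(μ.prod (muI c d)), u z.1 * g z.2 = 0 := by
      filter_upwards [hL, h0] with z h1 h2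
      rw [← h1, h2]; rfl
    have h2 := Measure.ae_ae_of_ae_prod h1
    apply hu0
    filter_upwards [h2] with x hx
    by_contra hux
    apply poly_ne c d hA0 hq
    filter_upwards [hx] with y hy
    exact (mul_eq_zero.1 hy).resolve_left hux
  · apply Lp.norm_le_mul_norm_of_ae_le_mul
    have hG : ∀ k, ∀ᵐ y ∂(muI c d), GG μ (φ k) (L q) y = (∫ s, star (φ k s) * u s ∂μ) * g y := by
      intro k
      filter_upwards [mt_GG_congr (φ k) hL] with y hy
      rw [hy, mt_GG_tensor]
    have hJ : ∀ᵐ x ∂μ, ∀ᵐ t ∂(muI c d), L q (x, t) = u x * g t := Measure.ae_ae_of_ae_prod hL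
    filter_upwards [Lp.coeFn_sub ((T1 + T2) (L q)) (l • L q), Lp.coeFn_smul l (L q),
      Lp.coeFn_add (T1 (L q)) (T2 (L q)), hL, hT1 (L q), hT2 (L q),
      mt_ae_snd (μ := μ) (ae_all_iff.2 hG), mt_ae_fst (ν := muI c d) hJ] with z h1 h2 h3 h4 h5 h6 h7 h8
    rw [h1, Pi.sub_apply, h2, Pi.smul_apply]
    have h3' : ((T1 + T2) (L q)) z = T1 (L q) z + T2 (L q) z := h3
    rw [h3', h5, h6]
    have h9 : ∀ j, ∫ t, star (ψ j t) * L q (z.1, t) ∂(muI c d) = 0 := by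
      intro j
      have : ∫ t, star (ψ j t) * L q (z.1, t) ∂(muI c d) = ∫ t, u z.1 * (star (ψ j t) * g t) ∂(muI c d) := by
        apply integral_congr_ae
        filter_upwards [h8] with t ht
        rw [ht]; ring
      rw [this, integral_const_mul, hK2, mul_zero]
    simp only [h7, h9, mul_zero, Finset.sum_const_zero, add_zero]
    have h10 : ∑ k, φ k z.1 * ((h k z.2 : ℂ) * ((∫ s, star (φ k s) * u s ∂μ) * g z.2)) =
        κ z.2 * (u z.1 * g z.2) := by
      rw [← mul_assoc, ← hκu, Finset.sum_mul]
      apply Finset.sum_congr rfl; intros; ring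
    rw [h10, h4, smul_eq_mul, ← sub_mul, norm_mul]
    by_cases hz : z.2 ∈ A
    · gcongr
      exact hκ _ hz
    · simp [hg, hz]

theorem muI_ne (c d : ℝ) (hcd : c < d) : muI c d Set.univ ≠ 0 := by
  simp [muI, hcd]

theorem mt_on_ne {μ : Measure ℝ} {u : ℝ → ℂ} (h : ∫ x, star (u x) * u x ∂μ = 1) :
    ¬ ∀ᵐ x ∂μ, u x = 0 := by
  intro h0
  have : ∫ x, star (u x) * u x ∂μ = 0 := by
    rw [← integral_zero ℝ ℂ]
    apply integral_congr_ae
    filter_upwards [h0] with x hx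
    simp [hx]
  rw [this] at h
  exact zero_ne_one h

theorem mt_ess {a b c d : ℝ} (hab : a < b) (hcd : c < d) {n m : ℕ}
    {φ : Fin n → ℝ → ℂ} {h : Fin n → ℝ → ℝ} {ψ : Fin m → ℝ → ℂ} {p : Fin m → ℝ → ℝ}
    (hφ : ∀ k, MemLp (φ k) 2 (muI a b))
    (hON : ∀ i j, ∫ x, star (φ i x) * φ j x ∂(muI a b) = if i = j then 1 else 0)
    (hm : ∀ k, Measurable (h k))
    (hψ : ∀ j, MemLp (ψ j) 2 (muI c d))
    {T1 T2 : Lp ℂ 2 ((muI a b).prod (muI c d)) →L[ℂ] Lp ℂ 2 ((muI a b).prod (muI c d))}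
    (hT1 : IsT (muI a b) (muI c d) φ h T1) (hT2 : IsT' (muI a b) (muI c d) ψ p T2)
    (E : Lp ℂ 2 ((muI a b).prod (muI c d)) →L[ℂ] Lp ℂ 2 ((muI a b).prod (muI c d)))
    (hE : FiniteDimensional ℂ (LinearMap.range E.toLinearMap))
    (l : ℂ) (δ : ℝ) (hδ : 0 < δ)
    (hbd : ∀ f, E f = 0 → δ * ‖f‖ ≤ ‖(T1 + T2) f - l • f‖) :
    l ≠ 0 ∧ ∀ k, ∃ ε : ℝ, 0 < ε ∧ ∀ᵐ y ∂(muI c d), ε ≤ ‖(h k y : ℂ) - l‖ := by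
  have hno : ¬ ∃ f, f ≠ 0 ∧ E f = 0 ∧ ‖(T1 + T2) f - l • f‖ ≤ (δ / 2) * ‖f‖ := by
    rintro ⟨f, hf0, hEf, hf⟩
    have h1 := hbd f hEf
    have h2 : 0 < ‖f‖ := norm_pos_iff.2 hf0
    nlinarith
  constructor
  · rintro rfl
    apply hno
    let J : Polynomial ℂ →ₗ[ℂ] (Fin n → ℂ) :=
      LinearMap.pi fun j => polyFun a b MeasurableSet.univ (φ j) (hφ j)
    obtain ⟨q, hq, hqK⟩ := poly_ker J
    refine mt_approx hψ hT1 hT2 E hE (poly_memLp a b MeasurableSet.univ q)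
      (poly_ne a b (muI_ne a b hab) hq) MeasurableSet.univ (muI_ne c d hcd) (fun _ => 0) 0 (δ / 2)
      (fun y _ => by simp; positivity) ?_
    intro x y
    have : ∀ i, ∫ s, star (φ i s) * Set.univ.indicator (fun y : ℝ => q.eval (y : ℂ)) s ∂(muI a b) = 0 :=
      fun i => congrFun hqK i
    simp only [this]
    simp
  · intro k
    by_contra hcon
    push Not at hcon
    apply hno
    have h1 := hcon (δ / 2) (by positivity)
    refine mt_approx hψ hT1 hT2 E hE (hφ k) (mt_on_ne (by rw [hON]; simp))
      (A := {y | ‖(h k y : ℂ) - l‖ < δ / 2}) ?_ ?_ (fun y => (h k y : ℂ)) l (δ / 2)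
      (fun y hy => le_of_lt hy) ?_
    · have := hm k
      exact measurableSet_lt (by fun_prop) (by fun_prop)
    · intro h0
      rw [measure_eq_zero_iff_ae_notMem] at h0
      rw [Filter.frequently_iff_forall_eventually_exists_and] at h1
      obtain ⟨y, hy1, hy2⟩ := h1 h0
      exact hy2 hy1
    · intro x y
      simp only [hON]
      simp [mul_comm]

section SW
variable {μ ν : Measure ℝ} [IsFiniteMeasure μ] [IsFiniteMeasure ν]

/-- swapping coordinates -/
def swV (μ ν : Measure ℝ) [IsFiniteMeasure μ] [IsFiniteMeasure ν] :
    Lp ℂ 2 (μ.prod ν) →L[ℂ] Lp ℂ 2 (ν.prod μ) :=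
  (Lp.compMeasurePreservingₗᵢ ℂ Prod.swap
    (Measure.measurePreserving_swap (μ := ν) (ν := μ))).toContinuousLinearMap

theorem swV_coe (f : Lp ℂ 2 (μ.prod ν)) : swV μ ν f =ᵐ[ν.prod μ] fun z => f z.swap :=
  Lp.coeFn_compMeasurePreserving f (Measure.measurePreserving_swap (μ := ν) (ν := μ))

theorem swV_norm (f : Lp ℂ 2 (μ.prod ν)) : ‖swV μ ν f‖ = ‖f‖ :=
  (Lp.compMeasurePreservingₗᵢ ℂ Prod.swap
    (Measure.measurePreserving_swap (μ := ν) (ν := μ))).norm_map f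

theorem ae_swap {q : ℝ × ℝ → Prop} (h : ∀ᵐ z ∂(μ.prod ν), q z) : ∀ᵐ z ∂(ν.prod μ), q z.swap :=
  (Measure.measurePreserving_swap (μ := ν) (ν := μ)).quasiMeasurePreserving.ae h

theorem swV_swV (f : Lp ℂ 2 (μ.prod ν)) : swV ν μ (swV μ ν f) = f := by
  apply Lp.ext
  filter_upwards [swV_coe (swV μ ν f), ae_swap (swV_coe f)] with z h1 h2
  rw [h1, h2]; simp

/-- conjugated operator -/
def swC (T : Lp ℂ 2 (μ.prod ν) →L[ℂ] Lp ℂ 2 (μ.prod ν)) :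
    Lp ℂ 2 (ν.prod μ) →L[ℂ] Lp ℂ 2 (ν.prod μ) :=
  (swV μ ν).comp (T.comp (swV ν μ))

theorem swC_apply (T : Lp ℂ 2 (μ.prod ν) →L[ℂ] Lp ℂ 2 (μ.prod ν)) (f) :
    swC T f = swV μ ν (T (swV ν μ f)) := rfl

theorem swC_isT {m : ℕ} {ψ : Fin m → ℝ → ℂ} {p : Fin m → ℝ → ℝ}
    {T : Lp ℂ 2 (μ.prod ν) →L[ℂ] Lp ℂ 2 (μ.prod ν)} (hT : IsT' μ ν ψ p T) :
    IsT ν μ ψ p (swC T) := by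
  intro f
  have h3 := mt_ae_snd (μ := ν) (Measure.ae_ae_of_ae_prod (swV_coe f))
  filter_upwards [swV_coe (T (swV ν μ f)), ae_swap (hT (swV ν μ f)), h3] with z h1 h2 h3
  rw [swC_apply, h1, h2]
  simp only [Prod.fst_swap, Prod.snd_swap]
  apply Finset.sum_congr rfl
  intro j _
  congr 2
  apply integral_congr_ae
  filter_upwards [h3] with t ht
  rw [ht]; rfl

theorem swC_isT' {n : ℕ} {φ : Fin n → ℝ → ℂ} {h : Fin n → ℝ → ℝ}
    {T : Lp ℂ 2 (μ.prod ν) →L[ℂ] Lp ℂ 2 (μ.prod ν)} (hT : IsT μ ν φ h T) :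
    IsT' ν μ φ h (swC T) := by
  intro f
  have h3 := mt_ae_fst (ν := μ) (mt_ae_swap (swV_coe f))
  filter_upwards [swV_coe (T (swV ν μ f)), ae_swap (hT (swV ν μ f)), h3] with z h1 h2 h3
  rw [swC_apply, h1, h2]
  simp only [Prod.fst_swap, Prod.snd_swap]
  apply Finset.sum_congr rfl
  intro j _
  congr 2
  apply integral_congr_ae
  filter_upwards [h3] with t ht
  rw [ht]; rfl

theorem swC_unit {T : Lp ℂ 2 (μ.prod ν) →L[ℂ] Lp ℂ 2 (μ.prod ν)} {l : ℂ}
    (hu : IsUnit (swC T - l • (1 : Lp ℂ 2 (ν.prod μ) →L[ℂ] Lp ℂ 2 (ν.prod μ)))) :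
    IsUnit (T - l • (1 : Lp ℂ 2 (μ.prod ν) →L[ℂ] Lp ℂ 2 (μ.prod ν))) := by
  rw [ContinuousLinearMap.isUnit_iff_bijective] at hu ⊢
  have key : ∀ f, (swC T - l • (1 : Lp ℂ 2 (ν.prod μ) →L[ℂ] Lp ℂ 2 (ν.prod μ))) (swV μ ν f) =
      swV μ ν ((T - l • (1 : Lp ℂ 2 (μ.prod ν) →L[ℂ] Lp ℂ 2 (μ.prod ν))) f) := by
    intro f
    simp [swC_apply, swV_swV]
  constructor
  · intro f g hfg
    have : swV μ ν f = swV μ ν g := by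
      apply hu.1
      rw [key, key, hfg]
    rw [← swV_swV f, this, swV_swV]
  · intro g
    obtain ⟨f, hf⟩ := hu.2 (swV μ ν g)
    refine ⟨swV ν μ f, ?_⟩
    have := key (swV ν μ f)
    rw [swV_swV, hf] at this
    rw [← swV_swV g, this, swV_swV]

theorem swC_fin (E : Lp ℂ 2 (μ.prod ν) →L[ℂ] Lp ℂ 2 (μ.prod ν))
    (hE : FiniteDimensional ℂ (LinearMap.range E.toLinearMap)) :
    FiniteDimensional ℂ (LinearMap.range (swC E).toLinearMap) := by
  refine Submodule.finiteDimensional_of_le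
    (S₂ := (LinearMap.range E.toLinearMap).map (swV μ ν).toLinearMap) ?_
  rintro _ ⟨f, rfl⟩
  exact ⟨E (swV ν μ f), ⟨_, rfl⟩, rfl⟩

theorem mt_isT' {m : ℕ} {ψ : Fin m → ℝ → ℂ} (hψ : ∀ k, MemLp (ψ k) 2 ν) {p : Fin m → ℝ → ℝ}
    {T : Lp ℂ 2 (μ.prod ν) →L[ℂ] Lp ℂ 2 (μ.prod ν)}
    (hT : ∀ f : Lp ℂ 2 (μ.prod ν), ∀ᵐ z ∂(μ.prod ν),
        T f z = ∫ t, (∑ j, (p j z.1 : ℂ) * ψ j z.2 * star (ψ j t)) * f (z.1, t) ∂ν) :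
    IsT' μ ν ψ p T := by
  intro f
  have hsl : ∀ᵐ x ∂μ, MemLp (fun t => f (x, t)) 2 ν := by
    have h1 := (Lp.memLp f).comp_measurePreserving (Measure.measurePreserving_swap (μ := ν) (ν := μ))
    exact mt_slice h1
  filter_upwards [hT f, mt_ae_fst (ν := ν) hsl] with z hz hs
  rw [hz]
  simp_rw [Finset.sum_mul]
  have : ∀ s k, (p k z.1 : ℂ) * ψ k z.2 * star (ψ k s) * f (z.1, s) =
    (ψ k z.2 * (p k z.1 : ℂ)) * (star (ψ k s) * f (z.1, s)) := by intros; ring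
  simp_rw [this]
  rw [integral_finsetSum]
  · simp_rw [integral_const_mul, mul_assoc]
  · intro i _
    exact (mt_int (hψ i) hs).const_mul _

theorem mt_S {n : ℕ} {φ : Fin n → ℝ → ℂ} {h : Fin n → ℝ → ℝ} (hφ : ∀ k, MemLp (φ k) 2 μ)
    (hON : ∀ i j, ∫ x, star (φ i x) * φ j x ∂μ = if i = j then 1 else 0)
    {T S : Lp ℂ 2 (μ.prod ν) →L[ℂ] Lp ℂ 2 (μ.prod ν)} (hT : IsT μ ν φ h T) {τ : ℂ}
    (hne : ∀ k, ∀ᵐ y ∂ν, 1 - τ * (h k y : ℂ) ≠ 0)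
    (hS : ∀ f : Lp ℂ 2 (μ.prod ν), S f =ᵐ[μ.prod ν] fun z =>
      ∑ k, φ k z.1 * (((h k z.2 : ℂ) / (1 - τ * (h k z.2 : ℂ))) * GG μ (φ k) f z.2)) :
    (1 - τ • T) * (1 + τ • S) = 1 := by
  have key : S - T - τ • (T * S) = 0 := by
    ext1 f
    have hSf : S f =ᵐ[μ.prod ν] fun z =>
      ∑ k, φ k z.1 * (((h k z.2 : ℂ) / (1 - τ * (h k z.2 : ℂ))) * GG μ (φ k) f z.2) + 0 * f z := by
      filter_upwards [hS f] with z hz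
      rw [hz]; ring
    have hd := fun k => mt_GG_decomp hφ hON (Lp.memLp f) 0
      (fun k y => ((h k y : ℂ) / (1 - τ * (h k y : ℂ))) * GG μ (φ k) f y) hSf k
    have e : (S - T - τ • (T * S)) f = S f - T f - τ • T (S f) := by simp
    rw [e, _root_.zero_apply, Lp.eq_zero_iff_ae_eq_zero]
    filter_upwards [Lp.coeFn_sub (S f - T f) (τ • T (S f)), Lp.coeFn_sub (S f) (T f),
      Lp.coeFn_smul τ (T (S f)), hS f, hT f, hT (S f), mt_ae_snd (μ := μ) (ae_all_iff.2 hd),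
      mt_ae_snd (μ := μ) (ae_all_iff.2 hne)] with z h1 h2 h3 h4 h5 h6 h7 h8
    rw [h1, Pi.sub_apply, h2, h3, Pi.sub_apply, Pi.smul_apply, h4, h5, h6]
    simp only [h7, smul_eq_mul, Pi.zero_apply]
    rw [Finset.mul_sum, ← Finset.sum_sub_distrib, ← Finset.sum_sub_distrib]
    apply Finset.sum_eq_zero
    intro k _
    have hx : (h k z.2 : ℂ) / (1 - τ * (h k z.2 : ℂ)) * (1 - τ * (h k z.2 : ℂ)) = (h k z.2 : ℂ) :=
      div_mul_cancel₀ _ (h8 k)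
    linear_combination (φ k z.1 * GG μ (φ k) f z.2) * hx
  have e : (1 - τ • T) * (1 + τ • S) = 1 + τ • (S - T - τ • (T * S)) := by
    simp only [sub_mul, mul_add, smul_mul_assoc, mul_smul_comm, mul_one, one_mul]
    module
  rw [e, key, smul_zero, add_zero]

theorem mt_fin {n m : ℕ} {φ : Fin n → ℝ → ℂ} (hφ : ∀ k, MemLp (φ k) 2 μ)
    {r : Fin n → ℝ → ℂ} (hr : ∀ k, Measurable (r k)) (hrb : ∀ k, ∃ C : ℝ, ∀ᵐ y ∂ν, ‖r k y‖ ≤ C)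
    {ψ : Fin m → ℝ → ℂ} (hψ : ∀ k, MemLp (ψ k) 2 ν) {p : Fin m → ℝ → ℝ}
    (hp : ∀ j, Measurable (p j)) (hpb : ∀ j, ∃ C : ℝ, ∀ᵐ x ∂μ, |p j x| ≤ C)
    {S T : Lp ℂ 2 (μ.prod ν) →L[ℂ] Lp ℂ 2 (μ.prod ν)} (hT : IsT' μ ν ψ p T)
    (hS : ∀ f : Lp ℂ 2 (μ.prod ν), S f =ᵐ[μ.prod ν] fun z =>
      ∑ k, φ k z.1 * (r k z.2 * GG μ (φ k) f z.2)) :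
    FiniteDimensional ℂ (LinearMap.range (S * T).toLinearMap) := by
  have hmem : ∀ (k : Fin n) (j : Fin m),
      MemLp (fun z : ℝ × ℝ => φ k z.1 * (r k z.2 * ψ j z.2)) 2 (μ.prod ν) := by
    intro k j
    obtain ⟨C, hC⟩ := hrb k
    exact mt_tensor (hφ k) (mt_bddmul (hr k) hC (hψ j))
  let e : Fin n × Fin m → Lp ℂ 2 (μ.prod ν) := fun i => (hmem i.1 i.2).toLp _
  have hfs : FiniteDimensional ℂ (Submodule.span ℂ (Set.range e)) :=
    FiniteDimensional.span_of_finite ℂ (Set.finite_range e)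
  refine Submodule.finiteDimensional_of_le (S₂ := Submodule.span ℂ (Set.range e)) ?_
  rintro _ ⟨f, rfl⟩
  let Jf : Fin m → ℝ → ℂ := fun j x => ∫ t, star (ψ j t) * f (x, t) ∂ν
  have hJ : ∀ j, MemLp (fun x => (p j x : ℂ) * Jf j x) 2 μ := by
    intro j
    have h1 := (Lp.memLp f).comp_measurePreserving (Measure.measurePreserving_swap (μ := ν) (ν := μ))
    obtain ⟨C, hC⟩ := hpb j
    have := hp j
    exact mt_bddmul (r := fun x => (p j x : ℂ)) (by fun_prop) (C := C)
      (by simpa [Complex.norm_real] using hC) (mt_GG_memLp (hψ j) h1)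
  let C : Fin n → Fin m → ℂ := fun k j => ∫ s, star (φ k s) * ((p j s : ℂ) * Jf j s) ∂μ
  have hG : ∀ k, ∀ᵐ y ∂ν, GG μ (φ k) (T f) y = ∑ j, C k j * ψ j y := by
    intro k
    filter_upwards [mt_GG_congr (φ k) (hT f)] with y hy
    rw [hy]
    unfold GG
    have : ∀ s, star (φ k s) * ∑ j, ψ j y * ((p j s : ℂ) * ∫ t, star (ψ j t) * f (s, t) ∂ν) =
        ∑ j, star (φ k s) * ((p j s : ℂ) * Jf j s) * ψ j y := by
      intro s
      rw [Finset.mul_sum]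
      apply Finset.sum_congr rfl; intros; simp only [Jf]; ring
    simp only [this]
    rw [integral_finsetSum]
    · simp_rw [integral_mul_const]; rfl
    · intro j _
      exact (mt_int (hφ k) (hJ j)).mul_const _
  have hsum : (S * T) f = ∑ k, ∑ j, C k j • e (k, j) := by
    have hmem2 : MemLp (fun z : ℝ × ℝ => ∑ k, ∑ j, C k j * (φ k z.1 * (r k z.2 * ψ j z.2))) 2 (μ.prod ν) :=
      memLp_finsetSum _ fun k _ => memLp_finsetSum _ fun j _ => (hmem k j).const_mul _
    have hcoe : (↑(∑ k, ∑ j, C k j • e (k, j)) : ℝ × ℝ → ℂ) =ᵐ[μ.prod ν]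
        fun z : ℝ × ℝ => ∑ k, ∑ j, C k j * (φ k z.1 * (r k z.2 * ψ j z.2)) := by
      have h1 : ∀ k j, (↑(C k j • e (k, j)) : ℝ × ℝ → ℂ) =ᵐ[μ.prod ν]
          fun z => C k j * (φ k z.1 * (r k z.2 * ψ j z.2)) := by
        intro k j
        filter_upwards [Lp.coeFn_smul (C k j) (e (k, j)), (hmem k j).coeFn_toLp] with z h1 h2
        rw [h1, Pi.smul_apply]
        simp only [e, h2, smul_eq_mul]
      have h2 := fun k => Lp.coeFn_finsetSum Finset.univ fun j => C k j • e (k, j)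
      filter_upwards [Lp.coeFn_finsetSum Finset.univ fun k => ∑ j, C k j • e (k, j),
        ae_all_iff.2 h2, ae_all_iff.2 fun k => ae_all_iff.2 (h1 k)] with z a1 a2 a3
      rw [a1, Finset.sum_apply]
      apply Finset.sum_congr rfl; intro k _
      rw [a2, Finset.sum_apply]
      apply Finset.sum_congr rfl; intro j _
      exact a3 k j
    apply Lp.ext
    filter_upwards [hcoe, hS (T f), mt_ae_snd (μ := μ) (ae_all_iff.2 hG)] with z h1 h2 h3
    rw [h1, mul_apply_eq_comp, h2]
    simp only [h3]
    apply Finset.sum_congr rfl; intro k _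
    rw [Finset.mul_sum, Finset.mul_sum]
    apply Finset.sum_congr rfl; intros; ring
  change (S * T) f ∈ _
  rw [hsum]
  exact Submodule.sum_mem _ fun k _ => Submodule.sum_mem _ fun j _ =>
    Submodule.smul_mem _ _ (Submodule.subset_span ⟨(k, j), rfl⟩)
end SW


theorem fa_unit_bound {H : Type*} [NormedAddCommGroup H] [NormedSpace ℂ H]
    (A : H →L[ℂ] H) (hA : IsUnit A) : ∃ δ : ℝ, 0 < δ ∧ ∀ f, δ * ‖f‖ ≤ ‖A f‖ := by
  obtain ⟨u, rfl⟩ := hA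
  set B : H →L[ℂ] H := ((u⁻¹ : (H →L[ℂ] H)ˣ) : H →L[ℂ] H)
  have hB : ∀ f, B ((u : H →L[ℂ] H) f) = f := by
    intro f
    have : (B * (u : H →L[ℂ] H)) f = (1 : H →L[ℂ] H) f := by rw [Units.inv_mul]
    simpa using this
  refine ⟨(‖B‖ + 1)⁻¹, by positivity, fun f => ?_⟩
  rw [inv_mul_le_iff₀ (by positivity)]
  calc ‖f‖ = ‖B ((u : H →L[ℂ] H) f)‖ := by rw [hB]
    _ ≤ ‖B‖ * ‖(u : H →L[ℂ] H) f‖ := B.le_opNorm _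
    _ ≤ (‖B‖ + 1) * ‖(u : H →L[ℂ] H) f‖ := by gcongr; linarith

theorem fa_factor {R : Type*} [Ring R] [Algebra ℂ R] (T1 T2 S W : R) (τ : ℂ)
    (hS : (1 - τ • T1) * (1 + τ • S) = 1) (hW : (1 - τ • T2) * W = S * T2) :
    (1 - τ • T1) * (1 - τ • T2) * (1 + -(τ ^ 2 • W)) = 1 - τ • (T1 + T2) := by
  have h1 : (1 - τ • T2) * (1 + -(τ ^ 2 • W)) = 1 - τ • ((1 + τ • S) * T2) := by
    rw [mul_add, mul_one, mul_neg, mul_smul_comm, hW, add_mul, one_mul, smul_mul_assoc]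
    module
  rw [mul_assoc, h1, mul_sub, mul_one, mul_smul_comm, ← mul_assoc, hS, one_mul]
  module

theorem fa_res_unit {R : Type*} [Ring R] [Algebra ℂ R] (T : R) (τ : ℂ) (h0 : τ ≠ 0)
    (h : τ⁻¹ ∈ resolventSet ℂ T) : IsUnit (1 - τ • T) ∧ IsUnit (T - τ⁻¹ • (1 : R)) := by
  rw [spectrum.mem_resolventSet_iff, Algebra.algebraMap_eq_smul_one] at h
  constructor
  · have h2 : IsUnit ((Units.mk0 τ h0) • (τ⁻¹ • (1 : R) - T)) := h.smul _
    rwa [Units.smul_def, Units.val_mk0, smul_sub, smul_smul, mul_inv_cancel₀ h0, one_smul] at h2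
  · simpa using h.neg

theorem fa_res_of_unit {R : Type*} [Ring R] [Algebra ℂ R] (T : R) (l : ℂ)
    (h : IsUnit (T - l • (1 : R))) : l ∈ resolventSet ℂ T := by
  rw [spectrum.mem_resolventSet_iff, Algebra.algebraMap_eq_smul_one]
  simpa using h.neg

theorem statement18
    (a b c d : ℝ) (hab : a < b) (hcd : c < d)
    (n : ℕ) (hn : 1 ≤ n)
    (φ : Fin n → ℝ → ℂ)
    (hφL2 : ∀ k, MemLp (φ k) 2 (muI a b))
    (hφON : ∀ i j, ∫ x, star (φ i x) * φ j x ∂(muI a b) = if i = j then 1 else 0)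
    (h : Fin n → ℝ → ℝ)
    (hhmeas : ∀ k, Measurable (h k))
    (hhbdd : ∀ k, ∃ C : ℝ, ∀ᵐ y ∂(muI c d), |h k y| ≤ C)
    (m : ℕ) (hm : 1 ≤ m)
    (ψ : Fin m → ℝ → ℂ)
    (hψL2 : ∀ j, MemLp (ψ j) 2 (muI c d))
    (hψON : ∀ i j, ∫ y, star (ψ i y) * ψ j y ∂(muI c d) = if i = j then 1 else 0)
    (p : Fin m → ℝ → ℝ)
    (hpmeas : ∀ j, Measurable (p j))
    (hpbdd : ∀ j, ∃ C : ℝ, ∀ᵐ x ∂(muI a b), |p j x| ≤ C)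
    (T1 T2 : Lp ℂ 2 ((muI a b).prod (muI c d)) →L[ℂ] Lp ℂ 2 ((muI a b).prod (muI c d)))
    (hT1sa : IsSelfAdjoint T1) (hT2sa : IsSelfAdjoint T2)
    (hT1 : ∀ f : Lp ℂ 2 ((muI a b).prod (muI c d)),
      ∀ᵐ z ∂((muI a b).prod (muI c d)),
        T1 f z = ∫ s, (∑ k, φ k z.1 * star (φ k s) * (h k z.2 : ℂ)) * f (s, z.2) ∂(muI a b))
    (hT2 : ∀ f : Lp ℂ 2 ((muI a b).prod (muI c d)),
      ∀ᵐ z ∂((muI a b).prod (muI c d)),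
        T2 f z = ∫ t, (∑ j, (p j z.1 : ℂ) * ψ j z.2 * star (ψ j t)) * f (z.1, t) ∂(muI c d))
    -- the orthogonal projections `P k`
    (P : Fin n → (Lp ℂ 2 ((muI a b).prod (muI c d)) →L[ℂ] Lp ℂ 2 ((muI a b).prod (muI c d))))
    (hP : ∀ k, ∀ f : Lp ℂ 2 ((muI a b).prod (muI c d)),
      ∀ᵐ z ∂((muI a b).prod (muI c d)),
        P k f z = φ k z.1 * ∫ s, star (φ k s) * f (s, z.2) ∂(muI a b))
    -- the operators S₁(τ)
    (S1 : ℂ → (Lp ℂ 2 ((muI a b).prod (muI c d)) →L[ℂ] Lp ℂ 2 ((muI a b).prod (muI c d))))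
    (hS1 : ∀ τ : ℂ, τ ≠ 0 → τ⁻¹ ∈ resolventSet ℂ T1 → τ⁻¹ ∈ resolventSet ℂ T2 →
      ∀ f : Lp ℂ 2 ((muI a b).prod (muI c d)),
        ∀ᵐ z ∂((muI a b).prod (muI c d)),
          S1 τ f z = ∑ k, ((h k z.2 : ℂ) / (1 - τ * (h k z.2 : ℂ))) * P k f z)
    -- the operators W₁(τ) = (E-τT₂)⁻¹ S₁(τ) T₂
    (W1 : ℂ → (Lp ℂ 2 ((muI a b).prod (muI c d)) →L[ℂ] Lp ℂ 2 ((muI a b).prod (muI c d))))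
    (hW1 : ∀ τ : ℂ, τ ≠ 0 → τ⁻¹ ∈ resolventSet ℂ T1 → τ⁻¹ ∈ resolventSet ℂ T2 →
      (1 - τ • T2) * W1 τ = S1 τ * T2)
    -- the sets D(T) and R(T)
    (DT : Set ℂ)
    (hDT : DT = {τ : ℂ | τ ≠ 0 ∧ τ⁻¹ ∈ resolventSet ℂ T1 ∧ τ⁻¹ ∈ resolventSet ℂ T2 ∧
      ∃ g : Lp ℂ 2 ((muI a b).prod (muI c d)), g ≠ 0 ∧ (τ ^ 2 • W1 τ) g = g})
    -- the set D₀(T)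
    (D0 : Set ℂ) (hD0 : D0 = (fun τ : ℂ => τ⁻¹) '' DT) :
    discreteSpectrum (T1 + T2) = D0 := by
  have hI1 : IsT (muI a b) (muI c d) φ h T1 := mt_isT hφL2 hT1
  have hI2 : IsT' (muI a b) (muI c d) ψ p T2 := mt_isT' hψL2 hT2
  -- separation of the symbols from the resolvent set
  have hsepT : ∀ l : ℂ, IsUnit (T1 - l • (1 : Lp ℂ 2 ((muI a b).prod (muI c d)) →L[ℂ]
      Lp ℂ 2 ((muI a b).prod (muI c d)))) →
      ∀ k, ∃ ε : ℝ, 0 < ε ∧ ∀ᵐ y ∂(muI c d), ε ≤ ‖(h k y : ℂ) - l‖ := by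
    intro l hu
    obtain ⟨δ, hδ, hb⟩ := fa_unit_bound _ hu
    have hz : IsT' (muI a b) (muI c d) (fun (j : Fin 0) (_ : ℝ) => (0 : ℂ))
        (fun (j : Fin 0) (_ : ℝ) => (0 : ℝ)) 0 := by
      intro f
      rw [_root_.zero_apply]
      filter_upwards [Lp.coeFn_zero ℂ 2 ((muI a b).prod (muI c d))] with z hz
      rw [hz]; simp
    refine (mt_ess hab hcd hφL2 hφON hhmeas (fun j => j.elim0) hI1 hz 0 ?_ l δ hδ ?_).2
    · refine Submodule.finiteDimensional_of_le (S₂ := ⊥) ?_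
      rintro _ ⟨f, rfl⟩
      simp
    · intro f _
      simpa using hb f
  -- factorization
  have hfac : ∀ τ : ℂ, τ ≠ 0 → τ⁻¹ ∈ resolventSet ℂ T1 → τ⁻¹ ∈ resolventSet ℂ T2 →
      (1 - τ • T1) * (1 - τ • T2) * (1 + -(τ ^ 2 • W1 τ)) = 1 - τ • (T1 + T2) ∧
      FiniteDimensional ℂ (LinearMap.range (S1 τ * T2).toLinearMap) := by
    intro τ h0 hr1 hr2
    have hsep := hsepT τ⁻¹ (fa_res_unit T1 τ h0 hr1).2
    have hlow : ∀ k, ∃ ε : ℝ, 0 < ε ∧ ∀ᵐ y ∂(muI c d), ε ≤ ‖1 - τ * (h k y : ℂ)‖ := by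
      intro k
      obtain ⟨ε, he, hk⟩ := hsep k
      refine ⟨‖τ‖ * ε, mul_pos (norm_pos_iff.2 h0) he, ?_⟩
      filter_upwards [hk] with y hy
      have : 1 - τ * (h k y : ℂ) = -(τ * ((h k y : ℂ) - τ⁻¹)) := by
        rw [mul_sub, mul_inv_cancel₀ h0]; ring
      rw [this, norm_neg, norm_mul]
      gcongr
    have hS : ∀ f : Lp ℂ 2 ((muI a b).prod (muI c d)), S1 τ f =ᵐ[(muI a b).prod (muI c d)] fun z =>
        ∑ k, φ k z.1 * (((h k z.2 : ℂ) / (1 - τ * (h k z.2 : ℂ))) * GG (muI a b) (φ k) f z.2) := by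
      intro f
      filter_upwards [hS1 τ h0 hr1 hr2 f, ae_all_iff.2 (fun k => hP k f)] with z h1 h2
      rw [h1]
      apply Finset.sum_congr rfl
      intro k _
      rw [h2 k]
      unfold GG
      ring
    refine ⟨fa_factor T1 T2 (S1 τ) (W1 τ) τ (mt_S hφL2 hφON hI1 ?_ hS) (hW1 τ h0 hr1 hr2), ?_⟩
    · intro k
      obtain ⟨ε, he, hk⟩ := hlow k
      filter_upwards [hk] with y hy h00
      rw [h00, norm_zero] at hy
      linarith
    · refine mt_fin (r := fun k y => (h k y : ℂ) / (1 - τ * (h k y : ℂ))) hφL2 ?_ ?_ hψL2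
        hpmeas hpbdd hI2 hS
      · intro k
        have := hhmeas k
        fun_prop
      · intro k
        obtain ⟨ε, he, hk⟩ := hlow k
        obtain ⟨C, hC⟩ := hhbdd k
        refine ⟨C / ε, ?_⟩
        filter_upwards [hk, hC] with y hy1 hy2
        rw [norm_div, Complex.norm_real, Real.norm_eq_abs]
        have := abs_nonneg (h k y)
        exact div_le_div₀ (this.trans hy2) hy2 he hy1
  rw [hD0, hDT]
  apply Set.Subset.antisymm
  · intro l hl
    obtain ⟨E, hE, δ, hδ, hbd⟩ := fa_disc_bound (T1 + T2) (hT1sa.add hT2sa) l hl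
    obtain ⟨hl0, hsep1⟩ := mt_ess hab hcd hφL2 hφON hhmeas hψL2 hI1 hI2 E hE l δ hδ hbd
    have hu1 := mt_unit hφL2 hφON hhmeas hhbdd hI1 hl0 hsep1
    have hbd' : ∀ f, swC E f = 0 → δ * ‖f‖ ≤ ‖(swC T2 + swC T1) f - l • f‖ := by
      intro f hf
      have h1 : E (swV _ _ f) = 0 := by
        have := congrArg (swV (muI c d) (muI a b)) hf
        rwa [swC_apply, swV_swV, map_zero] at this
      have h2 := hbd _ h1
      rw [swV_norm, ← swV_norm ((T1 + T2) _ - _)] at h2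
      convert h2 using 2
      rw [map_sub, map_smul, swV_swV, add_apply, add_apply, map_add, swC_apply, swC_apply, add_comm]
    obtain ⟨-, hsep2⟩ := mt_ess hcd hab hψL2 hψON hpmeas hφL2 (swC_isT hI2) (swC_isT' hI1)
      (swC E) (swC_fin E hE) l δ hδ hbd'
    have hu2 := swC_unit (mt_unit hψL2 hψON hpmeas hpbdd (swC_isT hI2) hl0 hsep2)
    have hr1 : (l⁻¹)⁻¹ ∈ resolventSet ℂ T1 := by
      rw [inv_inv]; exact fa_res_of_unit _ _ hu1
    have hr2 : (l⁻¹)⁻¹ ∈ resolventSet ℂ T2 := by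
      rw [inv_inv]; exact fa_res_of_unit _ _ hu2
    have hi0 : l⁻¹ ≠ 0 := inv_ne_zero hl0
    refine ⟨l⁻¹, ⟨hi0, hr1, hr2, ?_⟩, inv_inv l⟩
    obtain ⟨g, hgm, hg0⟩ := Submodule.exists_mem_ne_zero_of_ne_bot hl.2.2.1
    refine ⟨g, hg0, ?_⟩
    have hTg : (T1 + T2) g = l • g := by
      have : (T1 + T2) g - l • g = 0 := hgm
      exact sub_eq_zero.1 this
    have hfac' := (hfac l⁻¹ hi0 hr1 hr2).1
    have hzero : ((1 - l⁻¹ • T1) * (1 - l⁻¹ • T2)) ((1 + -(l⁻¹ ^ 2 • W1 l⁻¹)) g) = 0 := by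
      have h3 := congrArg (fun A => A g) hfac'
      have h4 : (1 - l⁻¹ • (T1 + T2)) g = g - l⁻¹ • ((T1 + T2) g) := rfl
      simp only [h4] at h3
      rw [hTg, smul_smul, inv_mul_cancel₀ hl0, one_smul, sub_self] at h3
      exact h3
    have hU := ((fa_res_unit T1 _ hi0 hr1).1.mul (fa_res_unit T2 _ hi0 hr2).1)
    rw [ContinuousLinearMap.isUnit_iff_bijective] at hU
    have h5 := (injective_iff_map_eq_zero _).1 hU.1 _ hzero
    have h6 : (1 + -(l⁻¹ ^ 2 • W1 l⁻¹)) g = g - (l⁻¹ ^ 2 • W1 l⁻¹) g := by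
      rw [sub_eq_add_neg]; rfl
    rw [h6] at h5
    exact (sub_eq_zero.1 h5).symm
  · rintro _ ⟨τ, ⟨h0, hr1, hr2, g, hg0, hg⟩, rfl⟩
    obtain ⟨hf, hfin⟩ := hfac τ h0 hr1 hr2
    have hu1 := (fa_res_unit T1 τ h0 hr1).1
    have hu2 := (fa_res_unit T2 τ h0 hr2).1
    have hWf : FiniteDimensional ℂ (LinearMap.range (-(τ ^ 2 • W1 τ)).toLinearMap) := by
      obtain ⟨u, hu⟩ := hu2
      have hw : -(τ ^ 2 • W1 τ) = (-(τ ^ 2 • ((u⁻¹ : (_)ˣ) : Lp ℂ 2 ((muI a b).prod (muI c d)) →L[ℂ]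
          Lp ℂ 2 ((muI a b).prod (muI c d))))) * (S1 τ * T2) := by
        rw [← hW1 τ h0 hr1 hr2, ← hu, neg_mul, smul_mul_assoc, Units.inv_mul_cancel_left]
      rw [hw]
      exact fa_fin_mul_left _ _ hfin
    have hA : IsUnit ((Units.mk0 (-τ⁻¹) (neg_ne_zero.2 (inv_ne_zero h0))) •
        ((1 - τ • T1) * (1 - τ • T2))) := (hu1.mul hu2).smul _
    rw [Units.smul_def, Units.val_mk0] at hA
    refine fa_isolated (T1 + T2) _ (-(τ ^ 2 • W1 τ)) (hT1sa.add hT2sa) τ⁻¹ hA hWf ?_ ⟨g, hg0, ?_⟩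
    · rw [smul_mul_assoc, hf, smul_sub, smul_smul, neg_mul, inv_mul_cancel₀ h0]
      module
    · rw [_root_.neg_apply, hg, add_neg_cancel]
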